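/- arXiv:2407.14475 — 8 statements merged into one kernel-verified Lean document; each statement's English description precedes it below -/
import Mathlib

section
/- Let X be a two-dimensional real Banach space, let λ ∈ (0,1), and let x, y ∈ S_X. If x is isosceles orthogonal to ((1−λ)/λ)·y, then the generalized local James constant satisfies β(λ, x) = ‖λx + (1−λ)y‖ = ‖λx − (1−λ)y‖. -/
theorem mono_aux {X : Type*} [NormedAddCommGroup X] [NormedSpace ℝ X]
    (y z w : X) (N b β : ℝ) (hy : ‖y‖ = N) (hz : ‖z‖ = N) (hb : 0 ≤ b) (hβ : 0 ≤ β)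
    (h : z = b • y - β • w) : ‖z + w‖ ≤ ‖y + w‖ := by
  have hN : 0 ≤ N := hy ▸ norm_nonneg y
  rcases le_total 1 β with h1 | h1
  · have hk : 0 < b + β := by linarith
    have e1 : (b + β) • (z + w) = (b + β - 1) • z + b • (y + w) := by
      rw [h]; module
    have e2 : (b + β) • y = z + β • (y + w) := by rw [h]; module
    have n1 : (b + β) * ‖z + w‖ ≤ (b + β - 1) * N + b * ‖y + w‖ := by
      have := norm_add_le ((b + β - 1) • z) (b • (y + w))
      rw [← e1, norm_smul_of_nonneg hk.le, norm_smul_of_nonneg hb,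
        norm_smul_of_nonneg (by linarith), hz] at this
      exact this
    have n2 : (b + β) * N ≤ N + β * ‖y + w‖ := by
      have := norm_add_le z (β • (y + w))
      rw [← e2, norm_smul_of_nonneg hk.le, norm_smul_of_nonneg hβ, hz, hy] at this
      exact this
    have : (b + β) * ‖z + w‖ ≤ (b + β) * ‖y + w‖ := by linarith
    exact le_of_mul_le_mul_left this hk
  · rcases hb.eq_or_lt with hb0 | hb0
    · subst hb0
      have hzw : N = β * ‖w‖ := by
        rw [← hz, h, zero_smul, zero_sub, norm_neg, norm_smul_of_nonneg hβ]
      have e : z + w = (1 - β) • w := by rw [h]; module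
      rw [e, norm_smul_of_nonneg (by linarith)]
      have := norm_sub_le (y + w) y
      rw [add_sub_cancel_left, hy] at this
      linarith
    · obtain ⟨g, hg1, hg2⟩ := exists_dual_vector'' ℝ (z + w)
      have hg2 : g (z + w) = ‖z + w‖ := by simpa using hg2
      have hle : ∀ v, |g v| ≤ ‖v‖ := fun v => by
        have := g.le_of_opNorm_le hg1 v
        simpa using this
      have e : b • y = β • (z + w) + (1 - β) • z := by rw [h]; module
      have e' : (1 - β) • z = b • y - β • (z + w) := by rw [e]; module
      have n1 : b * N ≤ β * ‖z + w‖ + (1 - β) * N := by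
        have := norm_add_le (β • (z + w)) ((1 - β) • z)
        rwa [← e, norm_smul_of_nonneg hb, norm_smul_of_nonneg hβ,
          norm_smul_of_nonneg (by linarith), hz, hy] at this
      have n2 : (1 - β) * N ≤ b * N + β * ‖z + w‖ := by
        have := norm_sub_le (b • y) (β • (z + w))
        rwa [← e', norm_smul_of_nonneg hb, norm_smul_of_nonneg hβ,
          norm_smul_of_nonneg (by linarith), hz, hy] at this
      have ge : b * g y = β * ‖z + w‖ + (1 - β) * g z := by
        have := congrArg g e
        rw [map_add, map_smul, map_smul, map_smul, hg2] at this
        simpa using this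
      have hG := hle z
      rw [hz] at hG
      have habs : |(1 - β - b) * g z| ≤ β * ‖z + w‖ := by
        rw [abs_mul]
        calc |1 - β - b| * |g z| ≤ |1 - β - b| * N := by gcongr
          _ = |(1 - β - b) * N| := by rw [abs_mul, abs_of_nonneg hN]
          _ ≤ _ := abs_le.2 ⟨by linarith, by linarith⟩
      have h3 := (abs_le.1 habs).1
      have h4 : g z ≤ g y := le_of_mul_le_mul_left (by linarith) hb0
      have h5 := (le_abs_self _).trans (hle (y + w))
      rw [map_add] at h5 hg2
      linarith

/-- If `X` is a two-dimensional real Banach space, `λ ∈ (0,1)`, `x, y` are unit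
vectors and `x` is isosceles orthogonal to `((1-λ)/λ) • y`, then the generalized local James
constant satisfies `β(λ, x) = ‖λx + (1-λ)y‖ = ‖λx - (1-λ)y‖`. -/
theorem stmt0 {X : Type*} [NormedAddCommGroup X] [NormedSpace ℝ X] [CompleteSpace X]
    (hdim : Module.finrank ℝ X = 2)
    (lam : ℝ) (hlam : lam ∈ Set.Ioo (0 : ℝ) 1)
    (x y : X) (hx : ‖x‖ = 1) (hy : ‖y‖ = 1)
    (hI : ‖x + ((1 - lam) / lam) • y‖ = ‖x - ((1 - lam) / lam) • y‖) :
    sSup {r : ℝ | ∃ z : X, ‖z‖ = 1 ∧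
        r = min ‖lam • x + (1 - lam) • z‖ ‖lam • x - (1 - lam) • z‖}
      = ‖lam • x + (1 - lam) • y‖ ∧
    ‖lam • x + (1 - lam) • y‖ = ‖lam • x - (1 - lam) • y‖ := by
  obtain ⟨h0, h1⟩ := hlam
  set μ := 1 - lam with hμ
  have hμ0 : 0 < μ := by linarith
  have heq : ‖lam • x + μ • y‖ = ‖lam • x - μ • y‖ := by
    have a1 : lam • x + μ • y = lam • (x + (μ / lam) • y) := by
      rw [smul_add, smul_smul, mul_div_cancel₀ _ h0.ne']
    have a2 : lam • x - μ • y = lam • (x - (μ / lam) • y) := by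
      rw [smul_sub, smul_smul, mul_div_cancel₀ _ h0.ne']
    rw [a1, a2, norm_smul, norm_smul, hI]
  refine ⟨?_, heq⟩
  have hp : ∀ c : ℝ, ‖c • x‖ = |c| := fun c => by rw [norm_smul, hx, mul_one, Real.norm_eq_abs]
  have hny : y ≠ x ∧ y ≠ -x := by
    constructor
    · rintro rfl
      rw [← add_smul, ← sub_smul, hp, hp] at heq
      rcases abs_eq_abs.1 heq with h | h <;> linarith
    · rintro rfl
      rw [smul_neg, sub_neg_eq_add, ← sub_eq_add_neg, ← add_smul, ← sub_smul, hp, hp] at heq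
      rcases abs_eq_abs.1 heq with h | h <;> linarith
  have hli : LinearIndependent ℝ ![x, y] := by
    rw [LinearIndependent.pair_iff]
    intro s t hst
    have e : s • x = -(t • y) := eq_neg_of_add_eq_zero_left hst
    have hab : |s| = |t| := by
      have := congrArg norm e
      rwa [hp, norm_neg, norm_smul, hy, mul_one, Real.norm_eq_abs] at this
    by_cases ht : t = 0
    · subst ht
      simpa using hab
    exfalso
    rcases abs_eq_abs.1 hab with h | h
    · subst h
      rw [← smul_neg] at e
      have := smul_right_injective X ht e
      exact hny.2 (by rw [this, neg_neg])
    · subst h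
      rw [neg_smul, neg_inj] at e
      exact hny.1 (smul_right_injective X ht e).symm
  have hspan := hli.span_eq_top_of_card_eq_finrank (by simp [hdim])
  have key : ∀ z : X, ‖z‖ = 1 → ∀ a b : ℝ, 0 ≤ b → z = a • x + b • y →
      min ‖lam • x + μ • z‖ ‖lam • x - μ • z‖ ≤ ‖lam • x + μ • y‖ := by
    intro z hz a b hb hzz
    have ny : ‖μ • y‖ = μ := by rw [norm_smul_of_nonneg hμ0.le, hy, mul_one]
    have nz : ‖μ • z‖ = μ := by rw [norm_smul_of_nonneg hμ0.le, hz, mul_one]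
    rcases le_total a 0 with ha | ha
    · apply (min_le_left _ _).trans
      have := mono_aux (μ • y) (μ • z) (lam • x) μ b (-(μ * a / lam)) ny nz hb
        (by rw [← neg_div]; apply div_nonneg _ h0.le; nlinarith)
        (by
          rw [hzz, smul_smul _ lam, neg_mul, div_mul_cancel₀ _ h0.ne']; module)
      rwa [add_comm, add_comm (μ • y)] at this
    · apply (min_le_right _ _).trans
      rw [heq]
      have := mono_aux (μ • y) (μ • z) (-(lam • x)) μ b (μ * a / lam) ny nz hb
        (by positivity)
        (by
          rw [hzz, smul_neg, smul_smul _ lam, div_mul_cancel₀ _ h0.ne']; module)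
      rwa [← sub_eq_add_neg, ← sub_eq_add_neg, norm_sub_rev, norm_sub_rev (μ • y)] at this
  apply IsGreatest.csSup_eq
  refine ⟨⟨y, hy, by rw [← heq, min_self]⟩, ?_⟩
  rintro r ⟨z, hz, rfl⟩
  have hm : z ∈ Submodule.span ℝ (Set.range ![x, y]) := by rw [hspan]; trivial
  simp only [Matrix.range_cons, Matrix.range_empty, Set.union_empty, Set.singleton_union] at hm
  obtain ⟨a, b, hzz⟩ := Submodule.mem_span_pair.1 hm
  rcases le_total 0 b with hb | hb
  · exact key z hz a b hb hzz.symm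
  · have := key (-z) (by rwa [norm_neg]) (-a) (-b) (by linarith) (by rw [← hzz]; module)
    rwa [smul_neg, sub_neg_eq_add, ← sub_eq_add_neg, min_comm] at this
end

section
/- Let X be a two-dimensional real Banach space and let λ ∈ (0,1). Then the generalized James constant satisfies J(λ, X) = sup{‖λx + (1−λ)y‖ : x, y ∈ S_X, x ⊥_I ((1−λ)/λ)·y} = sup{‖λx − (1−λ)y‖ : x, y ∈ S_X, x ⊥_I ((1−λ)/λ)·y}. -/
theorem aux_mono {X : Type*} [NormedAddCommGroup X] [NormedSpace ℝ X] (u v w : X)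
    (hu : ‖u‖ = 1) (hv : ‖v‖ = 1) (hw : ‖w‖ = 1) (α β c : ℝ) (hα : 0 ≤ α) (hβ : 0 ≤ β)
    (hc : 0 < c) (hc1 : c ≤ 1) (h : v = α • u + β • w) : ‖v - c • u‖ ≤ ‖w - c • u‖ := by
  have h1 : 1 ≤ α + β := by
    have := norm_add_le (α • u) (β • w)
    rw [← h, hv, norm_smul, norm_smul, hu, hw, Real.norm_of_nonneg hα, Real.norm_of_nonneg hβ] at this
    linarith
  have hD : c ≤ α + c * β := by nlinarith
  have hDp : 0 < α + c * β := by linarith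
  obtain ⟨s, hs⟩ : ∃ s, s = c / (α + c * β) := ⟨_, rfl⟩
  have hsD : s * α + c * (s * β) = c := by rw [hs]; field_simp
  have hs0 : 0 ≤ s := by rw [hs]; positivity
  have hs1 : s ≤ 1 := by rw [hs]; exact (div_le_one hDp).2 hD
  have ht0 : 0 ≤ s * β := by positivity
  have ht1 : 0 ≤ 1 - s * β := by
    have : 0 ≤ s * α := by positivity
    by_contra hh
    push Not at hh
    nlinarith
  have hsa : s * α = c * (1 - s * β) := by linarith
  have e0 : s • v = (c * (1 - s * β)) • u + (s * β) • w := by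
    rw [h, smul_add, smul_smul, smul_smul, hsa]
  have e1 : v - c • u = (1 - s) • v + (s * β) • (w - c • u) := by
    have : (1 - s) • v = v - s • v := by module
    rw [this, e0]; module
  have e2 : w = s • v + (1 - s * β) • (w - c • u) := by
    rw [e0]; module
  have n1 := norm_add_le ((1 - s) • v) ((s * β) • (w - c • u))
  rw [← e1, norm_smul, norm_smul, hv, Real.norm_of_nonneg ht0,
    Real.norm_of_nonneg (by linarith : 0 ≤ 1 - s)] at n1
  have n2 := norm_add_le (s • v) ((1 - s * β) • (w - c • u))
  rw [← e2, norm_smul, norm_smul, hv, hw, Real.norm_of_nonneg ht1,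
    Real.norm_of_nonneg hs0] at n2
  linarith

theorem aux_path {X : Type*} [NormedAddCommGroup X] [NormedSpace ℝ X] (a b : ℝ) (ha : 0 < a)
    (hab : a ≤ b) (x y : X) (hx : ‖x‖ = 1) (hy : ‖y‖ = 1) (hne : y ≠ -x)
    (hle : ‖a • x + b • y‖ ≤ ‖a • x - b • y‖) :
    ∃ z : X, ‖z‖ = 1 ∧ ‖a • x + b • z‖ = ‖a • x - b • z‖ ∧
      ‖a • x + b • y‖ ≤ ‖a • x + b • z‖ := by
  have hb : 0 < b := by linarith
  have hnz : ∀ t ∈ Set.Icc (0 : ℝ) 1, ‖(1 - t) • y + t • x‖ ≠ 0 := by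
    intro t ht h0
    have h1 : (1 - t) • y = -(t • x) := eq_neg_of_add_eq_zero_left (norm_eq_zero.1 h0)
    have h2 := congrArg norm h1
    rw [norm_neg, norm_smul, norm_smul, hx, hy, Real.norm_of_nonneg ht.1,
      Real.norm_of_nonneg (by linarith [ht.2])] at h2
    have h3 : t = 1 / 2 := by linarith
    apply hne
    have h4 : (2 : ℝ) • ((1 - t) • y) = (2 : ℝ) • (-(t • x)) := by rw [h1]
    rw [h3, smul_neg, smul_smul, smul_smul] at h4
    norm_num at h4
    exact h4
  let Y : ℝ → X := fun t => ‖(1 - t) • y + t • x‖⁻¹ • ((1 - t) • y + t • x)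
  have hYn : ∀ t ∈ Set.Icc (0 : ℝ) 1, ‖Y t‖ = 1 := by
    intro t ht
    simp only [Y, norm_smul, norm_inv, norm_norm]
    exact inv_mul_cancel₀ (hnz t ht)
  have hYc : ContinuousOn Y (Set.Icc 0 1) := by
    apply ContinuousOn.smul
    · exact ContinuousOn.inv₀ (by fun_prop) hnz
    · fun_prop
  have hY0 : Y 0 = y := by simp [Y, hy]
  have hY1 : Y 1 = x := by simp [Y, hx]
  have hcont : ContinuousOn (fun t => ‖a • x + b • Y t‖ - ‖a • x - b • Y t‖) (Set.Icc 0 1) := by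
    fun_prop
  have hx1 : ‖a • x + b • x‖ = a + b := by
    rw [← add_smul, norm_smul, hx, Real.norm_of_nonneg (by linarith), mul_one]
  have hx2 : ‖a • x - b • x‖ ≤ a + b := by
    refine (norm_sub_le _ _).trans ?_
    rw [norm_smul, norm_smul, hx, Real.norm_of_nonneg ha.le, Real.norm_of_nonneg hb.le]
    linarith
  have hivt := intermediate_value_Icc (zero_le_one (α := ℝ)) hcont
  obtain ⟨t, ht, h0⟩ := hivt (show (0 : ℝ) ∈ _ by
    simp only [hY0, hY1]
    constructor <;> linarith)
  refine ⟨Y t, hYn t ht, by simpa [sub_eq_zero] using h0, ?_⟩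
  rcases eq_or_lt_of_le ht.2 with h1 | h1
  · rw [h1, hY1, hx1]
    refine (norm_add_le _ _).trans ?_
    rw [norm_smul, norm_smul, hx, hy, Real.norm_of_nonneg ha.le, Real.norm_of_nonneg hb.le]
    linarith
  · have hN := hnz t ht
    have hNp : 0 < ‖(1 - t) • y + t • x‖ := lt_of_le_of_ne (norm_nonneg _) hN.symm
    have ht' : 0 < 1 - t := by linarith
    have key : y = (t / (1 - t)) • (-x) + (‖(1 - t) • y + t • x‖ / (1 - t)) • Y t := by
      have e : ‖(1 - t) • y + t • x‖ • Y t = (1 - t) • y + t • x := by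
        simp only [Y]
        rw [smul_smul, mul_inv_cancel₀ hN, one_smul]
      rw [div_eq_inv_mul ‖_‖, ← smul_smul, e, smul_add, smul_smul, smul_smul,
        inv_mul_cancel₀ ht'.ne']
      module
    have := aux_mono (-x) y (Y t) (by rwa [norm_neg]) hy (hYn t ht) _ _ (a / b)
      (div_nonneg ht.1 ht'.le) (div_nonneg hNp.le ht'.le) (div_pos ha hb)
      ((div_le_one hb).2 hab) key
    have f : ∀ z : X, ‖a • x + b • z‖ = b * ‖z - (a / b) • (-x)‖ := by
      intro z
      rw [← Real.norm_of_nonneg hb.le, ← norm_smul, Real.norm_of_nonneg hb.le, smul_sub, smul_smul, mul_div_cancel₀ _ hb.ne']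
      congr 1
      module
    rw [f, f]
    exact mul_le_mul_of_nonneg_left this hb.le

theorem aux_core {X : Type*} [NormedAddCommGroup X] [NormedSpace ℝ X]
    (hdim : Module.finrank ℝ X = 2) (a b : ℝ) (ha : 0 < a)
    (hab : a ≤ b) (x y : X) (hx : ‖x‖ = 1) (hy : ‖y‖ = 1) :
    ∃ z : X, ‖z‖ = 1 ∧ ‖a • x + b • z‖ = ‖a • x - b • z‖ ∧
      min ‖a • x + b • y‖ ‖a • x - b • y‖ ≤ ‖a • x + b • z‖ := by
  have hb : 0 < b := by linarith
  have gen : ∀ y : X, ‖y‖ = 1 → y ≠ x → y ≠ -x →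
      ∃ z : X, ‖z‖ = 1 ∧ ‖a • x + b • z‖ = ‖a • x - b • z‖ ∧
      min ‖a • x + b • y‖ ‖a • x - b • y‖ ≤ ‖a • x + b • z‖ := by
    intro y hy h1 h2
    rcases le_total ‖a • x + b • y‖ ‖a • x - b • y‖ with h | h
    · rw [min_eq_left h]
      exact aux_path a b ha hab x y hx hy h2 h
    · rw [min_eq_right h]
      have := aux_path a b ha hab x (-y) hx (by rwa [norm_neg]) (fun h => h1 (neg_injective h))
        (by simpa [sub_eq_add_neg] using h)
      simpa [sub_eq_add_neg] using this
  have low : ∀ z : X, ‖z‖ = 1 → b - a ≤ ‖a • x + b • z‖ := by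
    intro z hz
    have := norm_sub_le (a • x + b • z) (a • x)
    rw [add_sub_cancel_left, norm_smul, norm_smul, hx, hz, Real.norm_of_nonneg ha.le,
      Real.norm_of_nonneg hb.le] at this
    linarith
  by_cases hyx : y = x ∨ y = -x
  · have hmin : min ‖a • x + b • y‖ ‖a • x - b • y‖ ≤ b - a := by
      have e : ‖a • x - b • x‖ = b - a := by
        rw [← sub_smul, norm_smul, hx, mul_one, Real.norm_eq_abs, abs_sub_comm,
          abs_of_nonneg (by linarith)]
      rcases hyx with rfl | rfl
      · exact (min_le_right _ _).trans e.le
      · refine (min_le_left _ _).trans ?_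
        rw [smul_neg, ← sub_eq_add_neg, e]
    obtain ⟨w, hw⟩ : ∃ w : X, ∀ c : ℝ, c • x ≠ w := by
      by_contra hh
      push Not at hh
      have := finrank_le_one x hh
      omega
    have hw0 : ‖w‖ ≠ 0 := by
      intro h
      exact hw 0 (by rw [zero_smul, norm_eq_zero.1 h])
    obtain ⟨z, h1, h2, h3⟩ := gen (‖w‖⁻¹ • w)
      (by rw [norm_smul, norm_inv, norm_norm, inv_mul_cancel₀ hw0])
      (fun h => hw ‖w‖ (by rw [← h, smul_smul, mul_inv_cancel₀ hw0, one_smul]))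
      (fun h => hw (-‖w‖) (by
        rw [neg_smul, ← smul_neg, ← h, smul_smul, mul_inv_cancel₀ hw0, one_smul]))
    exact ⟨z, h1, h2, hmin.trans (low z h1)⟩
  · push Not at hyx
    exact gen y hy hyx.1 hyx.2

theorem aux_full {X : Type*} [NormedAddCommGroup X] [NormedSpace ℝ X]
    (hdim : Module.finrank ℝ X = 2) (a b : ℝ) (ha : 0 < a)
    (hb : 0 < b) (x y : X) (hx : ‖x‖ = 1) (hy : ‖y‖ = 1) :
    ∃ u v : X, ‖u‖ = 1 ∧ ‖v‖ = 1 ∧ ‖a • u + b • v‖ = ‖a • u - b • v‖ ∧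
      min ‖a • x + b • y‖ ‖a • x - b • y‖ ≤ ‖a • u + b • v‖ := by
  rcases le_total a b with h | h
  · obtain ⟨z, h1, h2⟩ := aux_core hdim a b ha h x y hx hy
    exact ⟨x, z, hx, h1, h2⟩
  · obtain ⟨z, h1, h2, h3⟩ := aux_core hdim b a hb h y x hy hx
    rw [add_comm, norm_sub_rev] at h2
    rw [add_comm, norm_sub_rev (b • y), add_comm (b • y)] at h3
    exact ⟨z, y, h1, hy, h2, h3⟩

/-- In a two-dimensional real Banach space, for `λ ∈ (0,1)` the generalized James
constant `J(λ, X)` equals the supremum of `‖λx + (1-λ)y‖` (equivalently of `‖λx - (1-λ)y‖`)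
over unit vectors `x, y` with `x` isosceles orthogonal to `((1-λ)/λ) • y`. -/
theorem stmt1 {X : Type*} [NormedAddCommGroup X] [NormedSpace ℝ X] [CompleteSpace X]
    (hdim : Module.finrank ℝ X = 2)
    (lam : ℝ) (hlam : lam ∈ Set.Ioo (0 : ℝ) 1) :
    sSup {r : ℝ | ∃ x y : X, ‖x‖ = 1 ∧ ‖y‖ = 1 ∧
        r = min ‖lam • x + (1 - lam) • y‖ ‖lam • x - (1 - lam) • y‖}
      = sSup {r : ℝ | ∃ x y : X, ‖x‖ = 1 ∧ ‖y‖ = 1 ∧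
          ‖x + ((1 - lam) / lam) • y‖ = ‖x - ((1 - lam) / lam) • y‖ ∧
          r = ‖lam • x + (1 - lam) • y‖} ∧
    sSup {r : ℝ | ∃ x y : X, ‖x‖ = 1 ∧ ‖y‖ = 1 ∧
        r = min ‖lam • x + (1 - lam) • y‖ ‖lam • x - (1 - lam) • y‖}
      = sSup {r : ℝ | ∃ x y : X, ‖x‖ = 1 ∧ ‖y‖ = 1 ∧
          ‖x + ((1 - lam) / lam) • y‖ = ‖x - ((1 - lam) / lam) • y‖ ∧
          r = ‖lam • x - (1 - lam) • y‖} := by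
  obtain ⟨ha, hl1⟩ := hlam
  have hb : 0 < 1 - lam := by linarith
  have iso : ∀ x y : X, ‖x + ((1 - lam) / lam) • y‖ = ‖x - ((1 - lam) / lam) • y‖ ↔
      ‖lam • x + (1 - lam) • y‖ = ‖lam • x - (1 - lam) • y‖ := by
    intro x y
    have e1 : lam • x + (1 - lam) • y = lam • (x + ((1 - lam) / lam) • y) := by
      rw [smul_add, smul_smul, mul_div_cancel₀ _ ha.ne']
    have e2 : lam • x - (1 - lam) • y = lam • (x - ((1 - lam) / lam) • y) := by
      rw [smul_sub, smul_smul, mul_div_cancel₀ _ ha.ne']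
    rw [e1, e2, norm_smul, norm_smul]
    exact (mul_right_inj' (norm_ne_zero_iff.2 ha.ne')).symm
  have hS : {r : ℝ | ∃ x y : X, ‖x‖ = 1 ∧ ‖y‖ = 1 ∧
          ‖x + ((1 - lam) / lam) • y‖ = ‖x - ((1 - lam) / lam) • y‖ ∧
          r = ‖lam • x - (1 - lam) • y‖} = {r : ℝ | ∃ x y : X, ‖x‖ = 1 ∧ ‖y‖ = 1 ∧
          ‖x + ((1 - lam) / lam) • y‖ = ‖x - ((1 - lam) / lam) • y‖ ∧
          r = ‖lam • x + (1 - lam) • y‖} := by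
    ext r
    constructor
    · rintro ⟨x, y, hx, hy, h, rfl⟩
      exact ⟨x, y, hx, hy, h, ((iso x y).1 h).symm⟩
    · rintro ⟨x, y, hx, hy, h, rfl⟩
      exact ⟨x, y, hx, hy, h, (iso x y).1 h⟩
  rw [hS, and_self]
  have bd : ∀ x y : X, ‖x‖ = 1 → ‖y‖ = 1 → ‖lam • x + (1 - lam) • y‖ ≤ 1 := by
    intro x y hx hy
    refine (norm_add_le _ _).trans ?_
    rw [norm_smul, norm_smul, hx, hy, Real.norm_of_nonneg ha.le, Real.norm_of_nonneg hb.le]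
    linarith
  obtain ⟨x0, hx0⟩ : ∃ x : X, ‖x‖ = 1 := by
    have : Nontrivial X := Module.nontrivial_of_finrank_pos (R := ℝ) (by omega)
    exact exists_norm_eq X zero_le_one
  apply le_antisymm
  · refine csSup_le ⟨_, x0, x0, hx0, hx0, rfl⟩ ?_
    rintro r ⟨x, y, hx, hy, rfl⟩
    obtain ⟨u, v, hu, hv, h1, h2⟩ := aux_full hdim lam (1 - lam) ha hb x y hx hy
    refine h2.trans (le_csSup ⟨1, ?_⟩ ⟨u, v, hu, hv, (iso u v).2 h1, rfl⟩)
    rintro r ⟨x, y, hx, hy, _, rfl⟩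
    exact bd x y hx hy
  · apply csSup_le
    · obtain ⟨u, v, hu, hv, h1, h2⟩ := aux_full hdim lam (1 - lam) ha hb x0 x0 hx0 hx0
      exact ⟨_, u, v, hu, hv, (iso u v).2 h1, rfl⟩
    · rintro r ⟨x, y, hx, hy, h, rfl⟩
      apply le_csSup
      · refine ⟨1, ?_⟩
        rintro r ⟨x, y, hx, hy, rfl⟩
        exact (min_le_left _ _).trans (bd x y hx hy)
      · exact ⟨x, y, hx, hy, by rw [← (iso x y).1 h, min_self]⟩
end

section
/- Let X be a real normed space. Then the Schäffer constant satisfies S(X) = inf{ε ∈ [0,2] : ε > 2 − 2ρ_X(ε)}, where ρ_X is the modulus of smoothness of X. -/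
/-- In a real normed space, the Schäffer constant satisfies
`S(X) = inf {ε ∈ [0,2] : ε > 2 - 2 ρ_X(ε)}`, where `ρ_X` is the modulus of smoothness
`ρ_X(ε) = sup {1 - ‖x+y‖/2 : x, y ∈ S_X, ‖x-y‖ ≤ ε}`. -/
theorem stmt7 {X : Type*} [NormedAddCommGroup X] [NormedSpace ℝ X] :
    sInf {r : ℝ | ∃ x y : X, ‖x‖ = 1 ∧ ‖y‖ = 1 ∧ r = max ‖x + y‖ ‖x - y‖}
      = sInf {ε : ℝ | ε ∈ Set.Icc (0 : ℝ) 2 ∧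
          ε > 2 - 2 * sSup {r : ℝ | ∃ x y : X, ‖x‖ = 1 ∧ ‖y‖ = 1 ∧ ‖x - y‖ ≤ ε ∧
            r = 1 - ‖x + y‖ / 2}} := by
  have key : ∀ ε : ℝ, ε ≤ 2 → ∀ x y : X, ‖x‖ = 1 → ‖y‖ = 1 → ‖x - y‖ ≤ ε → ‖x + y‖ < ε →
      ε ∈ {ε : ℝ | ε ∈ Set.Icc (0 : ℝ) 2 ∧
          ε > 2 - 2 * sSup {r : ℝ | ∃ x y : X, ‖x‖ = 1 ∧ ‖y‖ = 1 ∧ ‖x - y‖ ≤ ε ∧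
            r = 1 - ‖x + y‖ / 2}} := by
    intro ε h2 x y hx hy h1 h3
    refine ⟨⟨(norm_nonneg _).trans h1, h2⟩, ?_⟩
    have hb : BddAbove {r : ℝ | ∃ x y : X, ‖x‖ = 1 ∧ ‖y‖ = 1 ∧ ‖x - y‖ ≤ ε ∧
            r = 1 - ‖x + y‖ / 2} := by
      refine ⟨1, ?_⟩
      rintro r ⟨u, v, -, -, -, rfl⟩
      linarith [norm_nonneg (u + v)]
    have := le_csSup hb ⟨x, y, hx, hy, h1, rfl⟩
    linarith
  have key2 : ∀ ε ∈ {ε : ℝ | ε ∈ Set.Icc (0 : ℝ) 2 ∧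
          ε > 2 - 2 * sSup {r : ℝ | ∃ x y : X, ‖x‖ = 1 ∧ ‖y‖ = 1 ∧ ‖x - y‖ ≤ ε ∧
            r = 1 - ‖x + y‖ / 2}}, ∃ x y : X, ‖x‖ = 1 ∧ ‖y‖ = 1 ∧ max ‖x + y‖ ‖x - y‖ ≤ ε := by
    rintro ε ⟨⟨h0, h2⟩, h⟩
    by_contra hc
    push Not at hc
    have : sSup {r : ℝ | ∃ x y : X, ‖x‖ = 1 ∧ ‖y‖ = 1 ∧ ‖x - y‖ ≤ ε ∧
            r = 1 - ‖x + y‖ / 2} ≤ 1 - ε / 2 := by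
      apply Real.sSup_le
      · rintro r ⟨x, y, hx, hy, hxy, rfl⟩
        rcases lt_max_iff.1 (hc x y hx hy) with h | h <;> linarith
      · linarith
    linarith
  by_cases hX : ∃ x : X, ‖x‖ = 1
  · obtain ⟨x₀, hx₀⟩ := hX
    have two := key 2 le_rfl x₀ (-x₀) hx₀ (by simpa using hx₀)
      (by
        have := norm_sub_le x₀ (-x₀)
        rw [norm_neg, hx₀] at this
        linarith) (by simp)
    apply le_antisymm
    · apply le_csInf ⟨2, two⟩
      intro ε hε
      obtain ⟨x, y, hx, hy, h⟩ := key2 ε hε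
      refine le_trans (csInf_le ⟨0, ?_⟩ ⟨x, y, hx, hy, rfl⟩) h
      rintro r ⟨u, v, -, -, rfl⟩
      exact le_max_of_le_left (norm_nonneg _)
    · refine le_csInf ⟨max ‖x₀ + x₀‖ ‖x₀ - x₀‖, x₀, x₀, hx₀, hx₀, rfl⟩ ?_
      rintro r ⟨x, y, hx, hy, rfl⟩
      apply le_of_forall_gt_imp_ge_of_dense
      intro ε hε
      have hb : BddBelow {ε : ℝ | ε ∈ Set.Icc (0 : ℝ) 2 ∧
          ε > 2 - 2 * sSup {r : ℝ | ∃ x y : X, ‖x‖ = 1 ∧ ‖y‖ = 1 ∧ ‖x - y‖ ≤ ε ∧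
            r = 1 - ‖x + y‖ / 2}} := ⟨0, fun e he => he.1.1⟩
      obtain ⟨ha, hb'⟩ := max_lt_iff.1 hε
      rcases le_total ε 2 with h | h
      · exact csInf_le hb (key ε h x y hx hy hb'.le ha)
      · exact (csInf_le hb two).trans h
  · push Not at hX
    congr 1
    apply Set.Subset.antisymm
    · rintro r ⟨x, y, hx, -⟩
      exact absurd hx (hX x)
    · intro ε hε
      obtain ⟨x, y, hx, -⟩ := key2 ε hε
      exact absurd hx (hX x)
end

section
/- Let X be ℝ² equipped with a norm making it a real Banach space. Let v₁, v₂ ∈ S_X satisfy v₁ ≠ ±v₂ and v₁ ≺ v₂, and let w₁, w₂ ∈ S_X be such that vᵢ is isosceles orthogonal to wᵢ and −wᵢ ≺ vᵢ ≺ wᵢ for i ∈ {1, 2}. Then w₁ ≺ w₂. -/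
/-- The orientation relation `≺` on a space identified with `ℝ²` via the linear
equivalence `φ`: `a ≺ b` iff `a₁ b₂ - a₂ b₁ > 0`. -/
def precRel {X : Type*} [NormedAddCommGroup X] [NormedSpace ℝ X]
    (φ : X ≃ₗ[ℝ] ℝ × ℝ) (a b : X) : Prop :=
  (φ a).1 * (φ b).2 - (φ a).2 * (φ b).1 > 0

theorem auxA {X : Type*} [NormedAddCommGroup X] [NormedSpace ℝ X] {x y z : X}
    {α β γ : ℝ} (hα : 0 < α) (hβ : 0 < β) (hγ : 0 < γ)
    (hx : ‖x‖ = 1) (hy : ‖y‖ = 1) (hz : ‖z‖ = 1) (h : γ • y = α • x + β • z) :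
    (α + β) * ‖x - y‖ ≤ β * ‖x - z‖ + (α + β - γ) ∧ α + β - γ ≤ α * ‖x - z‖ := by
  have nrm : ∀ (c : ℝ) (u : X), 0 ≤ c → ‖c • u‖ = c * ‖u‖ := fun c u hc => by
    rw [norm_smul, Real.norm_of_nonneg hc]
  have hs : γ ≤ α + β := by
    have h1 := norm_add_le (α • x) (β • z)
    rw [← h, nrm _ _ hα.le, nrm _ _ hβ.le, nrm _ _ hγ.le, hx, hy, hz] at h1
    linarith
  constructor
  · have e : (α + β) • (x - y) = β • (x - z) - (α + β - γ) • y := by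
      have : γ • y - (α • x + β • z) = 0 := by rw [h, sub_self]
      rw [← sub_eq_zero, ← neg_eq_zero.mpr this]
      module
    have h1 := norm_sub_le (β • (x - z)) ((α + β - γ) • y)
    rw [← e, nrm _ _ (by linarith), nrm _ _ hβ.le, nrm _ _ (by linarith), hy] at h1
    linarith
  · have e : (α + β) • z = γ • y - α • (x - z) := by
      rw [h]; module
    have h1 := norm_sub_le (γ • y) (α • (x - z))
    rw [← e, nrm _ _ (by linarith), nrm _ _ hα.le, nrm _ _ hγ.le, hy, hz] at h1
    linarith

theorem auxB {X : Type*} [NormedAddCommGroup X] [NormedSpace ℝ X] {x y z : X}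
    {α β γ : ℝ} (hα : 0 < α) (hβ : 0 < β) (hγ : 0 < γ)
    (hx : ‖x‖ = 1) (hy : ‖y‖ = 1) (hz : ‖z‖ = 1) (h : γ • y = α • x + β • z)
    (hI : ‖x + y‖ = ‖x - y‖) : ‖x + z‖ < ‖x - z‖ := by
  by_contra! hab
  obtain ⟨h1, h2⟩ := auxA hα hβ hγ hx hy hz h
  have h' : β • z = α • (-x) + γ • y := by rw [h]; module
  obtain ⟨h3, h4⟩ := auxA hα hγ hβ (by rwa [norm_neg]) hz hy h'
  have e1 : ‖-x - z‖ = ‖x + z‖ := by rw [← norm_neg]; congr 1; abel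
  have e2 : ‖-x - y‖ = ‖x - y‖ := by rw [← hI, ← norm_neg]; congr 1; abel
  rw [e1, e2] at h3
  rw [e2] at h4
  have ra : ‖x - y‖ ≤ ‖x - z‖ := by
    refine le_of_mul_le_mul_left ?_ (add_pos hα hβ); linarith
  have br : ‖x + z‖ ≤ ‖x - y‖ := by
    refine le_of_mul_le_mul_left ?_ (add_pos hα hγ); linarith
  have ea : ‖x - z‖ = ‖x - y‖ := by linarith
  have eb : ‖x + z‖ = ‖x - y‖ := by linarith
  rw [ea] at h1 h2
  rw [eb] at h3
  have r1 : ‖x - y‖ ≤ 1 := by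
    refine le_of_mul_le_mul_left ?_ hα; linarith
  have r2 : α * ‖x - y‖ ≤ α := by nlinarith
  have hbg : β = γ := by linarith
  subst hbg
  have e : (2 * β + α) • x = β • (x + y) + β • (x - z) := by
    have : β • (x + y) + β • (x - z) = β • y + (2 * β) • x - β • z := by module
    rw [this, h]; module
  have h5 := norm_add_le (β • (x + y)) (β • (x - z))
  rw [← e, norm_smul, norm_smul, norm_smul, Real.norm_of_nonneg hβ.le,
    Real.norm_of_nonneg (by linarith), hx, hI, ea] at h5
  nlinarith

theorem auxC {X : Type*} [NormedAddCommGroup X] [NormedSpace ℝ X]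
    (φ : X ≃ₗ[ℝ] ℝ × ℝ) {x y z : X}
    (hx : ‖x‖ = 1) (hy : ‖y‖ = 1) (hz : ‖z‖ = 1)
    (hxy : precRel φ x y) (hyz : precRel φ y z) (hxz : precRel φ x z)
    (hI : ‖x + y‖ = ‖x - y‖) : ‖x + z‖ < ‖x - z‖ := by
  unfold precRel at *
  refine auxB hyz hxy hxz hx hy hz ?_ hI
  apply φ.injective
  simp only [map_add, map_smul]
  ext <;> simp <;> ring

theorem precNegR {X : Type*} [NormedAddCommGroup X] [NormedSpace ℝ X]
    (φ : X ≃ₗ[ℝ] ℝ × ℝ) {x y : X} (h : precRel φ x y) : precRel φ y (-x) := by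
  unfold precRel at *
  simp only [map_neg, Prod.fst_neg, Prod.snd_neg]; linarith

theorem precNegL {X : Type*} [NormedAddCommGroup X] [NormedSpace ℝ X]
    (φ : X ≃ₗ[ℝ] ℝ × ℝ) {x y : X} (h : precRel φ x y) : precRel φ (-y) x := by
  unfold precRel at *
  simp only [map_neg, Prod.fst_neg, Prod.snd_neg]; linarith

theorem precNN {X : Type*} [NormedAddCommGroup X] [NormedSpace ℝ X]
    (φ : X ≃ₗ[ℝ] ℝ × ℝ) {x y : X} (h : precRel φ x y) : precRel φ (-x) (-y) := by
  unfold precRel at *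
  simp only [map_neg, Prod.fst_neg, Prod.snd_neg]; linarith

theorem precEq {X : Type*} [NormedAddCommGroup X] [NormedSpace ℝ X]
    (φ : X ≃ₗ[ℝ] ℝ × ℝ) {v a b : X} (ha : ‖a‖ = 1) (hb : ‖b‖ = 1)
    (h1 : precRel φ v a) (h2 : precRel φ v b)
    (h : (φ a).1 * (φ b).2 - (φ a).2 * (φ b).1 = 0) : a = b := by
  unfold precRel at *
  have e : ((φ v).1 * (φ b).2 - (φ v).2 * (φ b).1) • a
      = ((φ v).1 * (φ a).2 - (φ v).2 * (φ a).1) • b := by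
    apply φ.injective
    simp only [map_smul]
    ext
    · simp; linear_combination (φ v).1 * h
    · simp; linear_combination (φ v).2 * h
  have n := congrArg norm e
  rw [norm_smul, norm_smul, ha, hb, Real.norm_of_nonneg h1.le, Real.norm_of_nonneg h2.le,
    mul_one, mul_one] at n
  rw [n] at e
  exact smul_right_injective X h1.ne' e

/-- Let `X` be `ℝ²` equipped with a norm making it a real Banach space (here: a real
Banach space linearly identified with `ℝ²` via `φ`). If `v₁, v₂` are unit vectors with
`v₁ ≠ ±v₂` and `v₁ ≺ v₂`, and `w₁, w₂` are unit vectors with `vᵢ ⊥_I wᵢ` and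
`-wᵢ ≺ vᵢ ≺ wᵢ` for `i = 1, 2`, then `w₁ ≺ w₂`. -/
theorem stmt8 {X : Type*} [NormedAddCommGroup X] [NormedSpace ℝ X] [CompleteSpace X]
    (φ : X ≃ₗ[ℝ] ℝ × ℝ)
    (v₁ v₂ w₁ w₂ : X)
    (hv₁ : ‖v₁‖ = 1) (hv₂ : ‖v₂‖ = 1) (hw₁ : ‖w₁‖ = 1) (hw₂ : ‖w₂‖ = 1)
    (hne : v₁ ≠ v₂) (hne' : v₁ ≠ -v₂)
    (hvv : precRel φ v₁ v₂)
    (hI₁ : ‖v₁ + w₁‖ = ‖v₁ - w₁‖) (hI₂ : ‖v₂ + w₂‖ = ‖v₂ - w₂‖)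
    (h₁ : precRel φ (-w₁) v₁) (h₁' : precRel φ v₁ w₁)
    (h₂ : precRel φ (-w₂) v₂) (h₂' : precRel φ v₂ w₂) :
    precRel φ w₁ w₂ := by
  have nn : ∀ {u : X}, ‖u‖ = 1 → ‖-u‖ = 1 := fun h => by rwa [norm_neg]
  have flip1 : ∀ a b : X, ‖a + -b‖ = ‖b - a‖ := fun a b => by
    rw [← sub_eq_add_neg, norm_sub_rev]
  have flip2 : ∀ a b : X, ‖a - -b‖ = ‖b + a‖ := fun a b => by
    rw [sub_neg_eq_add, add_comm]
  have flip3 : ∀ a b : X, ‖-a + b‖ = ‖b - a‖ := fun a b => by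
    congr 1; abel
  have flip4 : ∀ a b : X, ‖-a - b‖ = ‖b + a‖ := fun a b => by
    rw [← norm_neg]; congr 1; abel
  by_contra hcon
  have pl : ((φ v₁).1 * (φ w₂).2 - (φ v₁).2 * (φ w₂).1) *
      ((φ v₂).1 * (φ w₁).2 - (φ v₂).2 * (φ w₁).1) > 0 := by
    unfold precRel at *
    nlinarith [mul_pos h₁' h₂', mul_nonneg hvv.le (sub_nonneg.mpr (not_lt.mp hcon))]
  rcases pos_and_pos_or_neg_and_neg_of_mul_pos pl with ⟨p, q⟩ | ⟨p, q⟩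
  · have p : precRel φ v₁ w₂ := p
    have q : precRel φ v₂ w₁ := q
    -- w₁, -v₁, -v₂
    have k1 := auxC φ hw₁ (nn hv₁) (nn hv₂) (precNegR φ h₁') (precNN φ hvv) (precNegR φ q)
      (by rw [flip1, flip2, hI₁])
    rw [flip1, flip2] at k1
    -- w₂, -v₂ , and v₂, w₂, w₁
    rcases lt_or_eq_of_le (not_lt.mp hcon) with c | c
    · have c : precRel φ w₂ w₁ := by unfold precRel; linarith
      have k2 := auxC φ hv₂ hw₂ hw₁ h₂' c q hI₂
      linarith
    · have e := precEq φ hw₁ hw₂ q h₂' c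
      rw [← e] at hI₂
      linarith
  · have p : precRel φ w₂ v₁ := by unfold precRel; linarith
    have q : precRel φ w₁ v₂ := by unfold precRel; linarith
    have k1 := auxC φ (nn hw₂) hv₂ (nn hv₁) (precNegL φ h₂') (precNegR φ hvv) (precNN φ p)
      (by rw [flip3, flip4, hI₂])
    have g1 : ‖-w₂ + -v₁‖ = ‖w₂ + v₁‖ := by rw [← neg_add, norm_neg]
    have g2 : ‖-w₂ - -v₁‖ = ‖w₂ - v₁‖ := by rw [← norm_neg]; congr 1; abel
    rw [g1, g2] at k1
    rcases lt_or_eq_of_le (not_lt.mp hcon) with c | c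
    · have c : precRel φ w₂ w₁ := by unfold precRel; linarith
      have k2 := auxC φ hv₁ hw₁ (nn hw₂) h₁' (precNegR φ c) (precNegR φ p) hI₁
      rw [flip1, flip2] at k2
      linarith
    · have e := precEq φ (nn hw₁) hw₂ (precNegR φ q) h₂' (by
        simp only [map_neg, Prod.fst_neg, Prod.snd_neg]; linarith)
      rw [← e, flip3, flip4] at k1
      have f2 : ‖w₁ + v₁‖ = ‖v₁ + w₁‖ := by rw [add_comm]
      linarith
end

section
/- Let X be a two-dimensional polyhedral real Banach space, i.e., a two-dimensional Banach space whose closed unit ball has only finitely many extreme points. Then there exists an extreme point z of the closed unit ball B_X and a vector y ∈ S_X with z isosceles orthogonal to y such that J(X) = β(z) = ‖z + y‖ = ‖z − y‖. -/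
lemma aux_nonext {X : Type*} [NormedAddCommGroup X] [NormedSpace ℝ X] {x : X} (hx : ‖x‖ ≤ 1)
    (h : x ∉ Set.extremePoints ℝ (Metric.closedBall (0 : X) 1)) :
    ∃ u : X, u ≠ 0 ∧ ‖x + u‖ ≤ 1 ∧ ‖x - u‖ ≤ 1 := by
  by_contra! hc
  apply h
  rw [mem_extremePoints_iff_left]
  refine ⟨by simpa using hx, ?_⟩
  intro a ha b hb hab
  rw [mem_closedBall_zero_iff] at ha hb
  obtain ⟨r, s, hr, hs, hrs, rfl⟩ := hab
  by_contra hne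
  have hs1 : s = 1 - r := by linarith
  subst hs1
  have hab : a ≠ b := by
    rintro rfl
    apply hne
    rw [← add_smul]; simp
  have key : ∀ c : ℝ, 0 ≤ c → c ≤ 1 → ‖c • a + (1 - c) • b‖ ≤ 1 := by
    intro c h0 h1
    have := (convex_closedBall (0 : X) 1) (by simpa using ha : a ∈ _) (by simpa using hb : b ∈ _)
      h0 (by linarith : (0 : ℝ) ≤ 1 - c) (by ring)
    simpa using this
  obtain ⟨m, hm, hm1, hm2⟩ : ∃ m : ℝ, 0 < m ∧ m ≤ r ∧ m ≤ 1 - r :=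
    ⟨min r (1 - r), lt_min hr hs, min_le_left _ _, min_le_right _ _⟩
  have := hc (m • (a - b)) (smul_ne_zero hm.ne' (sub_ne_zero.2 hab)) (by
    have := key (r + m) (by linarith) (by linarith)
    convert this using 2
    module)
  have h2 := key (r - m) (by linarith) (by linarith)
  have e : r • a + (1 - r) • b - m • (a - b) = (r - m) • a + (1 - (r - m)) • b := by module
  rw [e] at this
  linarith

lemma aux_par {X : Type*} [NormedAddCommGroup X] [NormedSpace ℝ X]
    (hdim : Module.finrank ℝ X = 2) (f : X →L[ℝ] ℝ) (x u U : X) (hx : f x = 1) (hu : u ≠ 0)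
    (hfu : f u = 0) (hfU : f U = 0) : ∃ c : ℝ, c • u = U := by
  haveI : FiniteDimensional ℝ X := Module.finite_of_finrank_pos (by omega)
  have h0 : (f : X →ₗ[ℝ] ℝ) ≠ 0 := by
    intro h
    have := congrArg (fun g : X →ₗ[ℝ] ℝ => g x) h
    simp [hx] at this
  have h1 := Module.Dual.finrank_ker_add_one_of_ne_zero (f := (f : X →ₗ[ℝ] ℝ)) h0
  rw [hdim] at h1
  have h2 : Module.finrank ℝ (LinearMap.ker (f : X →ₗ[ℝ] ℝ)) = 1 := by omega
  have := (finrank_eq_one_iff_of_nonzero' (⟨u, by simpa using hfu⟩ : LinearMap.ker (f : X →ₗ[ℝ] ℝ))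
    (by simpa [Subtype.ext_iff] using hu)).1 h2 ⟨U, by simpa using hfU⟩
  obtain ⟨c, hc⟩ := this
  exact ⟨c, by simpa [Subtype.ext_iff] using hc⟩

lemma aux_ext {X : Type*} [NormedAddCommGroup X] [NormedSpace ℝ X]
    (hdim : Module.finrank ℝ X = 2) (f : X →L[ℝ] ℝ) (hf : ∀ v, f v ≤ ‖v‖)
    (x U : X) (hx : ‖x‖ ≤ 1) (hfx : f x = 1)
    (hfU : f U = 0) (h : x ∉ Set.extremePoints ℝ (Metric.closedBall (0 : X) 1)) :
    ∃ e : ℝ, 0 < e ∧ ∀ d, 0 ≤ d → d ≤ e → ‖x + d • U‖ ≤ 1 := by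
  obtain ⟨u, hu, h1, h2⟩ := aux_nonext hx h
  have hfu : f u = 0 := by
    have a := hf (x + u)
    have b := hf (x - u)
    rw [map_add] at a
    rw [map_sub] at b
    linarith
  obtain ⟨c, rfl⟩ := aux_par hdim f x u U hfx hu hfu hfU
  refine ⟨1 / (|c| + 1), by positivity, ?_⟩
  intro d hd hde
  have hk : |d * c| ≤ 1 := by
    rw [abs_mul, abs_of_nonneg hd]
    rw [le_div_iff₀ (by positivity)] at hde
    nlinarith [abs_nonneg c]
  rw [abs_le] at hk
  have e : x + d • c • u = ((1 + d * c) / 2) • (x + u) + ((1 - d * c) / 2) • (x - u) := by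
    module
  rw [e]
  refine (norm_add_le _ _).trans ?_
  rw [norm_smul, norm_smul, Real.norm_of_nonneg (by linarith), Real.norm_of_nonneg (by linarith)]
  nlinarith

lemma aux_dual {X : Type*} [NormedAddCommGroup X] [NormedSpace ℝ X] (x : X) :
    ∃ f : X →L[ℝ] ℝ, (∀ v, f v ≤ ‖v‖) ∧ f x = ‖x‖ := by
  obtain ⟨g, h1, h2⟩ := exists_dual_vector'' ℝ x
  refine ⟨g, fun v => ?_, by simpa using h2⟩
  have := g.le_of_opNorm_le h1 v
  rw [one_mul] at this
  exact (le_abs_self _).trans this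

lemma aux_st (a b c d : ℝ) : ∃ s t : ℝ, (s ≠ 0 ∨ t ≠ 0) ∧ 0 ≤ s * a + t * b ∧ 0 ≤ s * c + t * d := by
  by_cases h : a = 0 ∧ b = 0
  · obtain ⟨rfl, rfl⟩ := h
    rcases le_total 0 c with h | h
    · exact ⟨1, 0, by simp, by simp, by simpa⟩
    · exact ⟨-1, 0, by simp, by simp, by simpa⟩
  · have h' : b ≠ 0 ∨ a ≠ 0 := by tauto
    rcases le_total 0 (b * c - a * d) with h | h
    · refine ⟨b, -a, by simpa using h', by linarith, by linarith⟩
    · refine ⟨-b, a, by simpa using h', by linarith, by linarith⟩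

lemma aux_move {X : Type*} [NormedAddCommGroup X] [NormedSpace ℝ X]
    (hdim : Module.finrank ℝ X = 2) (x y : X) (hx : ‖x‖ = 1) (hy : ‖y‖ = 1) :
    ∃ x' y' : X, ‖x'‖ = 1 ∧ ‖y'‖ = 1 ∧ ‖x + y‖ ≤ ‖x' + y'‖ ∧ ‖x - y‖ ≤ ‖x' - y'‖ ∧
      (x' ∈ Set.extremePoints ℝ (Metric.closedBall (0 : X) 1) ∨
       y' ∈ Set.extremePoints ℝ (Metric.closedBall (0 : X) 1)) := by
  by_cases hxe : x ∈ Set.extremePoints ℝ (Metric.closedBall (0 : X) 1)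
  · exact ⟨x, y, hx, hy, le_rfl, le_rfl, Or.inl hxe⟩
  by_cases hye : y ∈ Set.extremePoints ℝ (Metric.closedBall (0 : X) 1)
  · exact ⟨x, y, hx, hy, le_rfl, le_rfl, Or.inr hye⟩
  obtain ⟨f, hf, hfx⟩ := aux_dual x
  obtain ⟨g, hg, hgy⟩ := aux_dual y
  obtain ⟨p, hp, hpx⟩ := aux_dual (x + y)
  obtain ⟨q, hq, hqx⟩ := aux_dual (x - y)
  obtain ⟨u, hu, hu1, hu2⟩ := aux_nonext hx.le hxe
  obtain ⟨v, hv, hv1, hv2⟩ := aux_nonext hy.le hye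
  rw [hx] at hfx
  rw [hy] at hgy
  have hfu : f u = 0 := by
    have a := hf (x + u)
    have b := hf (x - u)
    rw [map_add] at a
    rw [map_sub] at b
    linarith
  have hgv : g v = 0 := by
    have a := hg (y + v)
    have b := hg (y - v)
    rw [map_add] at a
    rw [map_sub] at b
    linarith
  obtain ⟨s, t, hst, h1, h2⟩ := aux_st (p u) (p v) (q u) (-q v)
  obtain ⟨U, hU⟩ : ∃ U, U = s • u := ⟨_, rfl⟩
  obtain ⟨V, hV⟩ : ∃ V, V = t • v := ⟨_, rfl⟩
  have hUV : U ≠ 0 ∨ V ≠ 0 := by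
    rcases hst with h | h
    · left; rw [hU]; exact smul_ne_zero h hu
    · right; rw [hV]; exact smul_ne_zero h hv
  have hfU : f U = 0 := by simp [hU, hfu]
  have hgV : g V = 0 := by simp [hV, hgv]
  have hpUV : 0 ≤ p U + p V := by simpa [hU, hV] using h1
  have hqUV : 0 ≤ q U - q V := by simp [hU, hV]; linarith
  let S : Set ℝ := {l | 0 ≤ l ∧ ‖x + l • U‖ ≤ 1 ∧ ‖y + l • V‖ ≤ 1}
  have hclosed : IsClosed S := by
    have c1 : IsClosed {l : ℝ | 0 ≤ l} := isClosed_le continuous_const continuous_id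
    have c2 : IsClosed {l : ℝ | ‖x + l • U‖ ≤ 1} := isClosed_le (by fun_prop) continuous_const
    have c3 : IsClosed {l : ℝ | ‖y + l • V‖ ≤ 1} := isClosed_le (by fun_prop) continuous_const
    exact c1.inter (c2.inter c3)
  have hb : ∀ (x U : X), ‖x‖ = 1 → U ≠ 0 → ∀ l : ℝ, 0 ≤ l → ‖x + l • U‖ ≤ 1 → l ≤ 2 / ‖U‖ := by
    intro x U hx hU l hl h
    rw [le_div_iff₀ (norm_pos_iff.2 hU)]
    have e : (x + l • U) - x = l • U := by abel
    have := norm_sub_le (x + l • U) x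
    rw [e, norm_smul, Real.norm_of_nonneg hl] at this
    linarith
  have hbdd : ∃ M, ∀ l ∈ S, l ≤ M := by
    rcases hUV with h | h
    · exact ⟨_, fun l hl => hb x U hx h l hl.1 hl.2.1⟩
    · exact ⟨_, fun l hl => hb y V hy h l hl.1 hl.2.2⟩
  obtain ⟨M, hM⟩ := hbdd
  have hcomp : IsCompact S :=
    isCompact_Icc.of_isClosed_subset hclosed (fun l hl => (⟨hl.1, hM l hl⟩ : l ∈ Set.Icc 0 M))
  obtain ⟨l, hl, hmax⟩ := hcomp.exists_isMaxOn (⟨0, by simp [S, hx, hy]⟩ : S.Nonempty)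
    continuous_id.continuousOn
  have hmax' : ∀ k ∈ S, k ≤ l := fun k hk => hmax hk
  obtain ⟨hl0, hlx, hly⟩ := hl
  have hfx' : f (x + l • U) = 1 := by simp [hfx, hfU]
  have hgy' : g (y + l • V) = 1 := by simp [hgy, hgV]
  refine ⟨x + l • U, y + l • V, le_antisymm hlx (hfx' ▸ hf _), le_antisymm hly (hgy' ▸ hg _),
    ?_, ?_, ?_⟩
  · refine le_trans ?_ (hp _)
    rw [← hpx]
    simp only [map_add, map_smul, smul_eq_mul]
    nlinarith
  · refine le_trans ?_ (hq _)
    rw [← hqx]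
    simp only [map_add, map_sub, map_smul, smul_eq_mul]
    nlinarith
  · by_contra! hc
    obtain ⟨e1, he1, H1⟩ := aux_ext hdim f hf _ U hlx hfx' hfU hc.1
    obtain ⟨e2, he2, H2⟩ := aux_ext hdim g hg _ V hly hgy' hgV hc.2
    have hm : 0 < min e1 e2 := lt_min he1 he2
    have := hmax' (l + min e1 e2) ⟨by linarith, by
      have := H1 _ hm.le (min_le_left _ _)
      rwa [add_assoc, ← add_smul] at this, by
      have := H2 _ hm.le (min_le_right _ _)
      rwa [add_assoc, ← add_smul] at this⟩
    linarith

lemma aux_mono_s9 {X : Type*} [NormedAddCommGroup X] [NormedSpace ℝ X] (z w y : X) (a b : ℝ)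
    (hz : ‖z‖ = 1) (hw : ‖w‖ = 1) (hy : ‖y‖ = 1) (ha : 0 ≤ a) (hb : 0 ≤ b)
    (h : y = a • w - b • z) : ‖z - w‖ ≤ ‖z - y‖ := by
  have hab : a ≤ 1 + b := by
    have e : a • w = y + b • z := by rw [h]; abel
    have := norm_add_le y (b • z)
    rw [← e, norm_smul, norm_smul, Real.norm_of_nonneg ha, Real.norm_of_nonneg hb, hz, hw, hy]
      at this
    linarith
  obtain ⟨m, hm⟩ : ∃ m, m = a / (1 + b) := ⟨_, rfl⟩
  have hb1 : (1 + b) ≠ 0 := by positivity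
  have hm0 : 0 ≤ m := by rw [hm]; positivity
  have hm1 : m ≤ 1 := by rw [hm, div_le_one (by positivity)]; exact hab
  have ham : a = m * (1 + b) := by rw [hm]; field_simp
  have e1 : z - w = (1 / (1 + b)) • (z - y) + (-(1 - m)) • w := by
    rw [h, ham]
    match_scalars <;> field_simp <;> ring
  have e2 : y = (-(b / (1 + b))) • (z - y) + m • w := by
    rw [h, ham]
    match_scalars <;> field_simp <;> ring
  have i1 := norm_add_le ((1 / (1 + b)) • (z - y)) ((-(1 - m)) • w)
  have i2 := norm_add_le ((-(b / (1 + b))) • (z - y)) (m • w)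
  rw [← e1, norm_smul, norm_smul, Real.norm_of_nonneg (by positivity), norm_neg,
    Real.norm_of_nonneg (by linarith), hw] at i1
  rw [← e2, norm_smul, norm_smul, norm_neg, Real.norm_of_nonneg (by positivity),
    Real.norm_of_nonneg hm0, hw, hy] at i2
  have : 1 / (1 + b) * ‖z - y‖ + b / (1 + b) * ‖z - y‖ = ‖z - y‖ := by field_simp
  linarith

lemma aux_iso {X : Type*} [NormedAddCommGroup X] [NormedSpace ℝ X] (z w : X)
    (hz : ‖z‖ = 1) (hw : ‖w‖ = 1) (hne : z ≠ w) (hle : ‖z - w‖ ≤ ‖z + w‖) :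
    ∃ y : X, ‖y‖ = 1 ∧ ‖z + y‖ = ‖z - y‖ ∧ ‖z - w‖ ≤ ‖z - y‖ := by
  let c : ℝ → X := fun t => (1 - t) • w - t • z
  have hc : ∀ t ∈ Set.Icc (0 : ℝ) 1, ‖c t‖ ≠ 0 := by
    rintro t ⟨h0, h1⟩ h
    have h := norm_eq_zero.1 h
    have h := sub_eq_zero.1 h
    have h' := congrArg norm h
    rw [norm_smul, norm_smul, hz, hw, Real.norm_of_nonneg h0, Real.norm_of_nonneg (by linarith)]
      at h'
    have ht : t = 1 / 2 := by linarith
    subst ht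
    norm_num at h
    exact hne h.symm
  let Y : ℝ → X := fun t => ‖c t‖⁻¹ • c t
  have hcc : Continuous c := by fun_prop
  have hY : ContinuousOn Y (Set.Icc 0 1) :=
    (hcc.norm.continuousOn.inv₀ hc).smul hcc.continuousOn
  have hF : ContinuousOn (fun t => ‖z + Y t‖ - ‖z - Y t‖) (Set.Icc 0 1) := by fun_prop
  have h0 : Y 0 = w := by simp [Y, c, hw]
  have h1 : Y 1 = -z := by simp [Y, c, hz]
  obtain ⟨t, ht, hFt⟩ := intermediate_value_Icc' zero_le_one hF
    (show (0 : ℝ) ∈ _ from ⟨by simp [h1], by simp only [h0]; linarith⟩)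
  have hn : ‖Y t‖ = 1 := by
    simp only [Y, norm_smul, norm_inv, norm_norm]
    exact inv_mul_cancel₀ (hc t ht)
  refine ⟨Y t, hn, by simpa [sub_eq_zero] using hFt, ?_⟩
  refine aux_mono_s9 z w (Y t) (‖c t‖⁻¹ * (1 - t)) (‖c t‖⁻¹ * t) hz hw hn ?_ ?_ ?_
  · exact mul_nonneg (by positivity) (by linarith [ht.2])
  · exact mul_nonneg (by positivity) ht.1
  · simp only [Y]
    rw [show c t = (1 - t) • w - t • z from rfl, smul_sub, smul_smul, smul_smul]


/-- In a two-dimensional polyhedral real Banach space (the closed unit ball has only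
finitely many extreme points), there exist an extreme point `z` of the closed unit ball and a unit
vector `y` with `z ⊥_I y` such that `J(X) = β(z) = ‖z + y‖ = ‖z - y‖`. -/
theorem stmt9 {X : Type*} [NormedAddCommGroup X] [NormedSpace ℝ X] [CompleteSpace X]
    (hdim : Module.finrank ℝ X = 2)
    (hpoly : (Set.extremePoints ℝ (Metric.closedBall (0 : X) 1)).Finite) :
    ∃ z ∈ Set.extremePoints ℝ (Metric.closedBall (0 : X) 1), ∃ y : X, ‖y‖ = 1 ∧
      ‖z + y‖ = ‖z - y‖ ∧
      sSup {r : ℝ | ∃ x w : X, ‖x‖ = 1 ∧ ‖w‖ = 1 ∧ r = min ‖x + w‖ ‖x - w‖}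
        = sSup {r : ℝ | ∃ w : X, ‖w‖ = 1 ∧ r = min ‖z + w‖ ‖z - w‖} ∧
      sSup {r : ℝ | ∃ w : X, ‖w‖ = 1 ∧ r = min ‖z + w‖ ‖z - w‖} = ‖z + y‖ := by
  haveI : FiniteDimensional ℝ X := Module.finite_of_finrank_pos (by omega)
  haveI : ProperSpace X := FiniteDimensional.proper_real X
  haveI : Nontrivial X := Module.nontrivial_of_finrank_pos (R := ℝ) (by omega)
  obtain ⟨x0, hx0⟩ := exists_norm_eq X zero_le_one
  have hK : IsCompact (Metric.sphere (0 : X) 1 ×ˢ Metric.sphere (0 : X) 1) :=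
    (isCompact_sphere _ _).prod (isCompact_sphere _ _)
  obtain ⟨⟨x, w⟩, hxw, hmax⟩ := hK.exists_isMaxOn ⟨(x0, x0), by simp [hx0]⟩
    (f := fun P : X × X => min ‖P.1 + P.2‖ ‖P.1 - P.2‖) (by fun_prop)
  have hmax' : ∀ a b : X, ‖a‖ = 1 → ‖b‖ = 1 → min ‖a + b‖ ‖a - b‖ ≤ min ‖x + w‖ ‖x - w‖ := by
    intro a b ha hb
    exact hmax (show (a, b) ∈ _ by simp [ha, hb])
  simp only [Set.mem_prod, mem_sphere_zero_iff_norm] at hxw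
  obtain ⟨x', w', hx', hw', i1, i2, hor⟩ := aux_move hdim x w hxw.1 hxw.2
  obtain ⟨z, v, hz, hv, hze, hzv⟩ : ∃ z v : X, ‖z‖ = 1 ∧ ‖v‖ = 1 ∧
      z ∈ Set.extremePoints ℝ (Metric.closedBall (0 : X) 1) ∧
      min ‖x + w‖ ‖x - w‖ ≤ min ‖z + v‖ ‖z - v‖ := by
    rcases hor with h | h
    · exact ⟨x', w', hx', hw', h, min_le_min i1 i2⟩
    · refine ⟨w', x', hw', hx', h, ?_⟩
      rw [add_comm w', norm_sub_rev w']
      exact min_le_min i1 i2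
  -- positivity
  have hpos : 0 < min ‖x + w‖ ‖x - w‖ := by
    have hx0' : x0 ≠ 0 := by
      rintro rfl
      simp at hx0
    obtain ⟨b, hb⟩ := exists_linearIndependent_pair_of_one_lt_finrank (R := ℝ) (by omega) hx0'
    rw [LinearIndependent.pair_iff] at hb
    have hb0 : b ≠ 0 := by
      rintro rfl
      simpa using hb 0 1 (by simp)
    have hbn : ‖b‖ ≠ 0 := norm_ne_zero_iff.2 hb0
    refine lt_of_lt_of_le ?_ (hmax' x0 (‖b‖⁻¹ • b) hx0 (by
      rw [norm_smul, norm_inv, norm_norm, inv_mul_cancel₀ hbn]))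
    refine lt_min (norm_pos_iff.2 fun h => ?_) (norm_pos_iff.2 fun h => ?_)
    · have := hb 1 ‖b‖⁻¹ (by rw [one_smul]; exact h)
      simp at this
    · have := hb 1 (-‖b‖⁻¹) (by rw [one_smul, neg_smul, ← sub_eq_add_neg]; exact h)
      simp at this
  have hpos' := hpos.trans_le hzv
  obtain ⟨y, hy, hiso, hge⟩ : ∃ y : X, ‖y‖ = 1 ∧ ‖z + y‖ = ‖z - y‖ ∧
      min ‖z + v‖ ‖z - v‖ ≤ ‖z - y‖ := by
    rcases le_total ‖z - v‖ ‖z + v‖ with h | h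
    · obtain ⟨y, h1, h2, h3⟩ := aux_iso z v hz hv (by
        rintro rfl
        simp at hpos') h
      exact ⟨y, h1, h2, (min_le_right _ _).trans h3⟩
    · obtain ⟨y, h1, h2, h3⟩ := aux_iso z (-v) hz (by simpa using hv) (by
        rintro rfl
        simp at hpos') (by simpa [← sub_eq_add_neg] using h)
      refine ⟨y, h1, h2, (min_le_left _ _).trans ?_⟩
      simpa using h3
  have hmin : min ‖z + y‖ ‖z - y‖ = ‖z + y‖ := by rw [hiso, min_self]
  have hub : ∀ a b : X, ‖a‖ = 1 → ‖b‖ = 1 → min ‖a + b‖ ‖a - b‖ ≤ ‖z + y‖ := by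
    intro a b ha hb
    rw [hiso]
    exact ((hmax' a b ha hb).trans hzv).trans hge
  have s1 : sSup {r : ℝ | ∃ x w : X, ‖x‖ = 1 ∧ ‖w‖ = 1 ∧ r = min ‖x + w‖ ‖x - w‖} = ‖z + y‖ := by
    refine IsGreatest.csSup_eq ⟨⟨z, y, hz, hy, hmin.symm⟩, ?_⟩
    rintro r ⟨a, b, ha, hb, rfl⟩
    exact hub a b ha hb
  have s2 : sSup {r : ℝ | ∃ w : X, ‖w‖ = 1 ∧ r = min ‖z + w‖ ‖z - w‖} = ‖z + y‖ := by
    refine IsGreatest.csSup_eq ⟨⟨y, hy, hmin.symm⟩, ?_⟩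
    rintro r ⟨b, hb, rfl⟩
    exact hub z b hz hb
  exact ⟨z, hze, y, hy, hiso, s1.trans s2.symm, s2⟩
end

section
/- Let X be ℝ² equipped with the norm ‖(x, y)‖ = max{|x|, |2x + y|/3, |2x − 3y|/5}, whose unit ball is the hexagon with vertices ±(1, −1), ±(1, 1), ±(1/2, 2). Then β((1, −1)) = 22/13, β((1, 1)) = 22/17, β((1/2, 2)) = 11/7, and consequently J(X) = 22/13. -/
noncomputable def hexN (a b : ℝ) : ℝ := max |a| (max (|2 * a + b| / 3) (|2 * a - 3 * b| / 5))

lemma hexN_le {a b : ℝ} (h : hexN a b ≤ 1) :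
    (-1 ≤ a ∧ a ≤ 1) ∧ (-3 ≤ 2 * a + b ∧ 2 * a + b ≤ 3) ∧
      (-5 ≤ 2 * a - 3 * b ∧ 2 * a - 3 * b ≤ 5) := by
  unfold hexN at h
  rw [max_le_iff, max_le_iff, div_le_iff₀ (by norm_num), div_le_iff₀ (by norm_num), abs_le,
    abs_le, abs_le] at h
  obtain ⟨⟨h1, h2⟩, ⟨h3, h4⟩, h5, h6⟩ := h
  refine ⟨⟨?_, ?_⟩, ⟨?_, ?_⟩, ?_, ?_⟩ <;> linarith

lemma lt_hexN {a b c : ℝ} (h : c < hexN a b) :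
    c < a ∨ c < -a ∨ 3 * c < 2 * a + b ∨ 3 * c < -(2 * a + b) ∨
      5 * c < 2 * a - 3 * b ∨ 5 * c < -(2 * a - 3 * b) := by
  unfold hexN at h
  rw [lt_max_iff, lt_max_iff, lt_div_iff₀ (by norm_num), lt_div_iff₀ (by norm_num), lt_abs,
    lt_abs, lt_abs, mul_comm c 3, mul_comm c 5] at h
  tauto

lemma hex_J {a b c d : ℝ} (h : hexN a b ≤ 1) (h' : hexN c d ≤ 1) :
    min (hexN (a + c) (b + d)) (hexN (a - c) (b - d)) ≤ 22 / 13 := by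
  by_contra! hc
  obtain ⟨h1, h2⟩ := lt_min_iff.1 hc
  obtain ⟨⟨_, _⟩, ⟨_, _⟩, _, _⟩ := hexN_le h
  obtain ⟨⟨_, _⟩, ⟨_, _⟩, _, _⟩ := hexN_le h'
  rcases lt_hexN h1 with h1 | h1 | h1 | h1 | h1 | h1 <;>
  rcases lt_hexN h2 with h2 | h2 | h2 | h2 | h2 | h2 <;> linarith

lemma hex_B2 {c d : ℝ} (h' : hexN c d ≤ 1) :
    min (hexN (1 + c) (1 + d)) (hexN (1 - c) (1 - d)) ≤ 22 / 17 := by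
  by_contra! hc
  obtain ⟨h1, h2⟩ := lt_min_iff.1 hc
  obtain ⟨⟨_, _⟩, ⟨_, _⟩, _, _⟩ := hexN_le h'
  rcases lt_hexN h1 with h1 | h1 | h1 | h1 | h1 | h1 <;>
  rcases lt_hexN h2 with h2 | h2 | h2 | h2 | h2 | h2 <;> linarith

lemma hex_B3 {c d : ℝ} (h' : hexN c d ≤ 1) :
    min (hexN (1 / 2 + c) (2 + d)) (hexN (1 / 2 - c) (2 - d)) ≤ 11 / 7 := by
  by_contra! hc
  obtain ⟨h1, h2⟩ := lt_min_iff.1 hc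
  obtain ⟨⟨_, _⟩, ⟨_, _⟩, _, _⟩ := hexN_le h'
  rcases lt_hexN h1 with h1 | h1 | h1 | h1 | h1 | h1 <;>
  rcases lt_hexN h2 with h2 | h2 | h2 | h2 | h2 | h2 <;> linarith


/-- Let `X` be `ℝ²` (here: a real Banach space linearly identified with `ℝ²`
via `φ`) equipped with the norm `‖(x, y)‖ = max {|x|, |2x + y|/3, |2x - 3y|/5}`, whose unit ball
is the hexagon with vertices `±(1, -1)`, `±(1, 1)`, `±(1/2, 2)`. Then `β((1,-1)) = 22/13`,
`β((1,1)) = 22/17`, `β((1/2,2)) = 11/7`, and consequently `J(X) = 22/13`. -/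
theorem stmt11 {X : Type*} [NormedAddCommGroup X] [NormedSpace ℝ X] [CompleteSpace X]
    (φ : X ≃ₗ[ℝ] ℝ × ℝ)
    (hnorm : ∀ u : X, ‖u‖ = max |(φ u).1|
      (max (|2 * (φ u).1 + (φ u).2| / 3) (|2 * (φ u).1 - 3 * (φ u).2| / 5))) :
    sSup {r : ℝ | ∃ y : X, ‖y‖ = 1 ∧
        r = min ‖φ.symm (1, -1) + y‖ ‖φ.symm (1, -1) - y‖} = 22 / 13 ∧
    sSup {r : ℝ | ∃ y : X, ‖y‖ = 1 ∧
        r = min ‖φ.symm (1, 1) + y‖ ‖φ.symm (1, 1) - y‖} = 22 / 17 ∧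
    sSup {r : ℝ | ∃ y : X, ‖y‖ = 1 ∧
        r = min ‖φ.symm (1 / 2, 2) + y‖ ‖φ.symm (1 / 2, 2) - y‖} = 11 / 7 ∧
    sSup {r : ℝ | ∃ x y : X, ‖x‖ = 1 ∧ ‖y‖ = 1 ∧ r = min ‖x + y‖ ‖x - y‖} = 22 / 13 := by
  have hN : ∀ u : X, ‖u‖ = hexN (φ u).1 (φ u).2 := hnorm
  clear hnorm
  have e1 : hexN 1 (-1) = 1 := by norm_num [hexN, abs_of_pos, abs_of_neg]
  refine ⟨IsGreatest.csSup_eq ⟨⟨φ.symm (9 / 13, 21 / 13), ?_, ?_⟩, ?_⟩,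
    IsGreatest.csSup_eq ⟨⟨φ.symm (-5 / 17, 25 / 17), ?_, ?_⟩, ?_⟩,
    IsGreatest.csSup_eq ⟨⟨φ.symm (1, -2 / 7), ?_, ?_⟩, ?_⟩,
    IsGreatest.csSup_eq ⟨⟨φ.symm (1, -1), φ.symm (9 / 13, 21 / 13), ?_, ?_, ?_⟩, ?_⟩⟩
  case refine_3 =>
    rintro r ⟨y, hy, rfl⟩
    rw [hN] at hy
    simpa [hN] using hex_J e1.le hy.le
  case refine_6 =>
    rintro r ⟨y, hy, rfl⟩
    rw [hN] at hy
    simpa [hN] using hex_B2 hy.le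
  case refine_9 =>
    rintro r ⟨y, hy, rfl⟩
    rw [hN] at hy
    simpa [hN] using hex_B3 hy.le
  case refine_13 =>
    rintro r ⟨x, y, hx, hy, rfl⟩
    rw [hN] at hx hy
    simpa [hN] using hex_J hx.le hy.le
  all_goals
    simp only [hN, map_add, map_sub, LinearEquiv.apply_symm_apply, Prod.mk_add_mk, Prod.mk_sub_mk,
      hexN]
    norm_num [abs_of_pos, abs_of_neg]
end

section
/- Let X be a two-dimensional real Banach space, let x ∈ S_X, and let ε ∈ [0, 1). Then the approximate isosceles orthogonality set A(x, ε) = {y ∈ S_X : x ⊥_I^ε y} can be written as A(x, ε) = D ∪ (−D), where D is a connected subset of S_X. -/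
theorem aux_key {X : Type*} [NormedAddCommGroup X] [NormedSpace ℝ X] (x y z : X)
    (hx : ‖x‖ = 1) (hy : ‖y‖ = 1) (hz : ‖z‖ = 1) (a b : ℝ) (ha : 0 ≤ a) (hb : 0 ≤ b)
    (h : z = a • x + b • y) : ‖x - z‖ ≤ ‖x - y‖ := by
  have h1 : 1 ≤ a + b := by
    have := norm_add_le (a • x) (b • y)
    rw [← h, norm_smul, norm_smul, hx, hy, hz, Real.norm_of_nonneg ha,
      Real.norm_of_nonneg hb] at this
    linarith
  have h2 : a + b - 1 ≤ a * ‖x - y‖ := by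
    have e : (a + b) • y = z - a • (x - y) := by rw [h]; module
    have := norm_sub_le z (a • (x - y))
    rw [← e, norm_smul, norm_smul, hy, hz, Real.norm_of_nonneg ha,
      Real.norm_of_nonneg (by linarith)] at this
    linarith
  have h3 : (a + b) * ‖x - z‖ ≤ b * ‖x - y‖ + (a + b - 1) := by
    have e : (a + b) • (x - z) = b • (x - y) - (a + b - 1) • z := by
      have : (a + b) • (x - z) = b • (x - y) - (a + b - 1) • z + ((a • x + b • y) - z) := by
        module
      rw [this, ← h]; simp
    have := norm_sub_le (b • (x - y)) ((a + b - 1) • z)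
    rw [← e, norm_smul, norm_smul, norm_smul, hz, Real.norm_of_nonneg hb,
      Real.norm_of_nonneg (by linarith), Real.norm_of_nonneg (by linarith)] at this
    linarith
  have h4 : (a + b) * ‖x - z‖ ≤ (a + b) * ‖x - y‖ := by linarith
  exact le_of_mul_le_mul_left h4 (by linarith)

theorem aux_mono_s17 {X : Type*} [NormedAddCommGroup X] [NormedSpace ℝ X] (x e : X)
    (hx : ‖x‖ = 1) (h0 : ∀ t : ℝ, t • x + e ≠ 0) (t s : ℝ) (hts : t ≤ s) :
    ‖x - ‖s • x + e‖⁻¹ • (s • x + e)‖ ≤ ‖x - ‖t • x + e‖⁻¹ • (t • x + e)‖ := by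
  have hs := norm_pos_iff.2 (h0 s)
  have ht := norm_pos_iff.2 (h0 t)
  refine aux_key x _ _ hx ?_ ?_
    (‖s • x + e‖⁻¹ * (s - t)) (‖s • x + e‖⁻¹ * ‖t • x + e‖) ?_ ?_ ?_
  · rw [norm_smul, norm_inv, norm_norm, inv_mul_cancel₀ ht.ne']
  · rw [norm_smul, norm_inv, norm_norm, inv_mul_cancel₀ hs.ne']
  · have : 0 ≤ s - t := by linarith
    positivity
  · positivity
  · rw [smul_smul, mul_assoc, mul_inv_cancel₀ ht.ne']
    module

theorem stmt17 {X : Type*} [NormedAddCommGroup X] [NormedSpace ℝ X] [CompleteSpace X]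
    (hdim : Module.finrank ℝ X = 2)
    (x : X) (hx : ‖x‖ = 1) (ε : ℝ) (hε : ε ∈ Set.Ico (0 : ℝ) 1) :
    ∃ D : Set X, D ⊆ {y : X | ‖y‖ = 1} ∧ IsConnected D ∧
      {y : X | ‖y‖ = 1 ∧ |‖x + y‖ ^ 2 - ‖x - y‖ ^ 2| ≤ 4 * ε * ‖x‖ * ‖y‖} = D ∪ (-D) := by
  obtain ⟨hε0, hε1⟩ := hε
  have hx0 : x ≠ 0 := by rintro rfl; simp at hx
  obtain ⟨e, hli⟩ := exists_linearIndependent_pair_of_one_lt_finrank (R := ℝ)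
    (by omega : 1 < Module.finrank ℝ X) hx0
  have hspan : ∀ y : X, ∃ a b : ℝ, a • x + b • e = y := by
    intro y
    have h := hli.span_eq_top_of_card_eq_finrank (by simp [hdim])
    have hy : y ∈ Submodule.span ℝ (Set.range ![x, e]) := by rw [h]; trivial
    rw [Matrix.range_cons, Matrix.range_cons, Matrix.range_empty, Set.union_empty,
      Set.singleton_union] at hy
    exact Submodule.mem_span_pair.1 hy
  have hli' := LinearIndependent.pair_iff.1 hli
  have h0 : ∀ t : ℝ, t • x + e ≠ 0 := by
    intro t h
    have := hli' t 1 (by simpa using h)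
    simp at this
  have h0' : ∀ t : ℝ, t • (-x) + e ≠ 0 := by
    intro t h
    exact h0 (-t) (by simpa using h)
  have hpos : ∀ t : ℝ, 0 < ‖t • x + e‖ := fun t => norm_pos_iff.2 (h0 t)
  set f : X → ℝ := fun y => ‖x + y‖ ^ 2 - ‖x - y‖ ^ 2 with hf
  set γ : ℝ → X := fun t => ‖t • x + e‖⁻¹ • (t • x + e) with hγ
  have hγc : Continuous γ := by
    apply Continuous.smul
    · exact Continuous.inv₀ (by fun_prop) (fun t => (hpos t).ne')
    · fun_prop
  have hγ1 : ∀ t, ‖γ t‖ = 1 := by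
    intro t
    simp only [hγ]
    rw [norm_smul, norm_inv, norm_norm, inv_mul_cancel₀ (hpos t).ne']
  have hfc : Continuous f := by fun_prop
  have hfneg : ∀ y, f (-y) = - f y := by
    intro y
    simp only [hf, sub_neg_eq_add, ← sub_eq_add_neg]
    ring
  have hmono : Monotone (fun t => f (γ t)) := by
    intro t s hts
    have h1 : ‖x - γ s‖ ≤ ‖x - γ t‖ := aux_mono_s17 x e hx h0 t s hts
    have h2 : ‖x + γ t‖ ≤ ‖x + γ s‖ := by
      have := aux_mono_s17 (-x) e (by simpa using hx) h0' (-s) (-t) (by linarith)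
      simp only [smul_neg, neg_smul, neg_neg] at this
      rw [← norm_neg, ← norm_neg (x + γ s)]
      simpa only [hγ, neg_add, ← sub_eq_add_neg] using this
    have h3 : ‖x - γ s‖ ^ 2 ≤ ‖x - γ t‖ ^ 2 := by gcongr
    have h4 : ‖x + γ t‖ ^ 2 ≤ ‖x + γ s‖ ^ 2 := by gcongr
    simp only [hf]
    linarith
  have hfx : f x = 4 := by
    simp only [hf, sub_self, norm_zero, ← two_smul ℝ x, norm_smul, hx]
    norm_num
  -- representation of points of the set
  have hrep : ∀ y : X, ‖y‖ = 1 → |f y| ≤ 4 * ε → (∃ t, γ t = y) ∨ (∃ t, γ t = -y) := by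
    have main : ∀ (y : X) (a b : ℝ), ‖y‖ = 1 → a • x + b • e = y → 0 < b → ∃ t, γ t = y := by
      intro y a b hy hab hb
      refine ⟨a / b, ?_⟩
      have h1 : (a / b) • x + e = b⁻¹ • y := by
        rw [← hab, smul_add, smul_smul, smul_smul, inv_mul_cancel₀ hb.ne', one_smul,
          div_eq_inv_mul]
      simp only [hγ]
      rw [h1, norm_smul, hy, mul_one, Real.norm_of_nonneg (by positivity), inv_inv, smul_smul,
        mul_inv_cancel₀ hb.ne', one_smul]
    intro y hy hfy
    obtain ⟨a, b, hab⟩ := hspan y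
    rcases lt_trichotomy b 0 with hb | hb | hb
    · right
      refine main (-y) (-a) (-b) (by simpa using hy) ?_ (by linarith)
      rw [← hab]; module
    · exfalso
      rw [hb, zero_smul, add_zero] at hab
      have ha : |a| = 1 := by
        rw [← hab, norm_smul, hx, mul_one] at hy
        exact hy
      have : |f y| = 4 := by
        rcases eq_or_eq_neg_of_abs_eq ha with h | h
        · rw [← hab, h, one_smul, hfx]; norm_num
        · rw [← hab, h, neg_smul, one_smul, hfneg, hfx]; norm_num
      linarith
    · left
      exact main y a b hy hab hb
  have hset : ∀ y : X, (‖y‖ = 1 ∧ |‖x + y‖ ^ 2 - ‖x - y‖ ^ 2| ≤ 4 * ε * ‖x‖ * ‖y‖) ↔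
      (‖y‖ = 1 ∧ |f y| ≤ 4 * ε) := by
    intro y
    constructor
    · rintro ⟨h1, h2⟩
      rw [hx, h1, mul_one, mul_one] at h2
      exact ⟨h1, h2⟩
    · rintro ⟨h1, h2⟩
      rw [hx, h1, mul_one, mul_one]
      exact ⟨rfl, h2⟩
  have hne : ∃ y : X, ‖y‖ = 1 ∧ f y = 0 := by
    have hc : IsConnected (Metric.sphere (0 : X) 1) :=
      isConnected_sphere (Module.lt_rank_of_lt_finrank (by omega)) 0 zero_le_one
    have := hc.isPreconnected.intermediate_value (a := -x) (b := x) (by simp [hx])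
      (by simp [hx]) hfc.continuousOn
    obtain ⟨y, hy, hy0⟩ := this (show (0 : ℝ) ∈ Set.Icc (f (-x)) (f x) by
      rw [hfneg, hfx]; constructor <;> norm_num)
    exact ⟨y, by simpa using hy, hy0⟩
  refine ⟨γ '' {t | |f (γ t)| ≤ 4 * ε}, ?_, ⟨?_, ?_⟩, ?_⟩
  · rintro _ ⟨t, -, rfl⟩
    exact hγ1 t
  · obtain ⟨y, hy, hy0⟩ := hne
    rcases hrep y hy (by rw [hy0, abs_zero]; linarith) with ⟨t, ht⟩ | ⟨t, ht⟩
    · refine ⟨_, t, ?_, rfl⟩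
      show |f (γ t)| ≤ 4 * ε
      rw [ht, hy0, abs_zero]; linarith
    · refine ⟨_, t, ?_, rfl⟩
      show |f (γ t)| ≤ 4 * ε
      rw [ht, hfneg, hy0, neg_zero, abs_zero]; linarith
  · apply IsPreconnected.image _ _ hγc.continuousOn
    apply Set.OrdConnected.isPreconnected
    refine ⟨fun t ht s hs r hr => ?_⟩
    have h1 := abs_le.1 (show |f (γ t)| ≤ 4 * ε from ht)
    have h2 := abs_le.1 (show |f (γ s)| ≤ 4 * ε from hs)
    have h3 : f (γ t) ≤ f (γ r) := hmono hr.1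
    have h4 : f (γ r) ≤ f (γ s) := hmono hr.2
    show |f (γ r)| ≤ 4 * ε
    exact abs_le.2 ⟨by linarith, by linarith⟩
  · ext y
    rw [Set.mem_setOf_eq, hset y]
    constructor
    · rintro ⟨h1, h2⟩
      rcases hrep y h1 h2 with ⟨t, ht⟩ | ⟨t, ht⟩
      · left
        refine ⟨t, ?_, ht⟩
        show |f (γ t)| ≤ 4 * ε
        rw [ht]; exact h2
      · right
        refine ⟨t, ?_, ht⟩
        show |f (γ t)| ≤ 4 * ε
        rw [ht, hfneg, abs_neg]; exact h2
    · rintro (⟨t, ht, rfl⟩ | ⟨t, ht, hty⟩)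
      · exact ⟨hγ1 t, ht⟩
      · have h1 : |f (γ t)| ≤ 4 * ε := ht
        have h2 := hγ1 t
        rw [hty] at h1 h2
        rw [hfneg, abs_neg] at h1
        rw [norm_neg] at h2
        exact ⟨h2, h1⟩
end

section
/- Let X be ℝ² equipped with the supremum norm ‖(a, b)‖ = max{|a|, |b|} and let x₀ = (1, 0). Then β(x₀) = 1, and for every α ∈ (0, 1) the vector y = (α, 1) ∈ S_X satisfies min{‖x₀ − y‖, ‖x₀ + y‖} = 1 = β(x₀) while x₀ is not isosceles orthogonal to y (indeed ‖x₀ + y‖ = 1 + α ≠ 1 = ‖x₀ − y‖). -/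
/-- In `ℝ²` with the supremum norm (the product norm on `ℝ × ℝ`), for
`x₀ = (1, 0)` one has `β(x₀) = 1`, and for every `α ∈ (0, 1)` the vector `y = (α, 1)` is a unit
vector satisfying `min {‖x₀ - y‖, ‖x₀ + y‖} = 1 = β(x₀)` while `x₀` is not isosceles orthogonal
to `y`: indeed `‖x₀ + y‖ = 1 + α ≠ 1 = ‖x₀ - y‖`. -/
theorem stmt19 :
    sSup {r : ℝ | ∃ y : ℝ × ℝ, ‖y‖ = 1 ∧
        r = min ‖((1 : ℝ), (0 : ℝ)) + y‖ ‖((1 : ℝ), (0 : ℝ)) - y‖} = 1 ∧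
    ∀ α : ℝ, α ∈ Set.Ioo (0 : ℝ) 1 →
      ‖((α, 1) : ℝ × ℝ)‖ = 1 ∧
      min ‖((1 : ℝ), (0 : ℝ)) - ((α, 1) : ℝ × ℝ)‖ ‖((1 : ℝ), (0 : ℝ)) + ((α, 1) : ℝ × ℝ)‖ = 1 ∧
      ‖((1 : ℝ), (0 : ℝ)) + ((α, 1) : ℝ × ℝ)‖ = 1 + α ∧
      ‖((1 : ℝ), (0 : ℝ)) - ((α, 1) : ℝ × ℝ)‖ = 1 ∧
      ‖((1 : ℝ), (0 : ℝ)) + ((α, 1) : ℝ × ℝ)‖ ≠ ‖((1 : ℝ), (0 : ℝ)) - ((α, 1) : ℝ × ℝ)‖ := by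
  constructor
  · apply IsGreatest.csSup_eq
    constructor
    · refine ⟨(0, 1), ?_, ?_⟩ <;> simp [Prod.norm_def]
    · rintro r ⟨⟨a, b⟩, hy, rfl⟩
      have ha : |a| ≤ 1 := by
        rw [← hy]; exact norm_fst_le (a, b)
      have hb : |b| ≤ 1 := by
        rw [← hy]; exact norm_snd_le (a, b)
      have ha' := abs_le.1 ha
      rcases le_total a 0 with h | h
      · apply min_le_of_left_le
        simp only [Prod.mk_add_mk, Prod.norm_def, Real.norm_eq_abs, zero_add]
        exact max_le (abs_le.2 ⟨by linarith, by linarith⟩) hb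
      · apply min_le_of_right_le
        simp only [Prod.mk_sub_mk, Prod.norm_def, Real.norm_eq_abs, zero_sub, abs_neg]
        exact max_le (abs_le.2 ⟨by linarith, by linarith⟩) hb
  · rintro α ⟨h0, h1⟩
    have e1 : ‖((α, 1) : ℝ × ℝ)‖ = 1 := by
      simp only [Prod.norm_def, Real.norm_eq_abs, abs_one]
      exact max_eq_right (abs_le.2 ⟨by linarith, by linarith⟩)
    have e2 : ‖((1 : ℝ), (0 : ℝ)) + ((α, 1) : ℝ × ℝ)‖ = 1 + α := by
      simp only [Prod.mk_add_mk, Prod.norm_def, Real.norm_eq_abs, zero_add, abs_one]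
      rw [abs_of_pos (by linarith)]
      exact max_eq_left (by linarith)
    have e3 : ‖((1 : ℝ), (0 : ℝ)) - ((α, 1) : ℝ × ℝ)‖ = 1 := by
      simp only [Prod.mk_sub_mk, Prod.norm_def, Real.norm_eq_abs, zero_sub, abs_neg, abs_one]
      exact max_eq_right (abs_le.2 ⟨by linarith, by linarith⟩)
    refine ⟨e1, ?_, e2, e3, ?_⟩
    · rw [e2, e3]; exact min_eq_left (by linarith)
    · rw [e2, e3]; intro h; linarith
end
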